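/- (Lemma 5.2: passivity of the standard linear FrBD_{n+1}-GKV model on a rectangular contact area.) Let a, b, S > 0 and let 𝒞 = [−a, a] × [−b, b]. Let p : ℝ² → ℝ be continuously differentiable with p ≥ 0 and ∂p/∂x ≥ 0 on 𝒞 (so that ∇·(p V̄) ≤ 0 for the transport field V̄ = (−1, 0), condition (56)). Let ε ≥ 0, let v̄ : 𝒞 × [0, S] → ℝ² be continuous, V_r : [0, S] → ℝ continuous with V_r(s) ≥ V_min for some V_min > 0, and let M be continuous with symmetric positive definite values. Suppose z, z_1, …, z_n : 𝒞 × [0, S] → ℝ² are continuously differentiable, satisfy the standard linear FrBD_{n+1}-GKV equations at every interior point, and satisfy the leading-edge boundary condition z(a, y, s) = 0 and z_i(a, y, s) = 0 for all y ∈ [−b, b], s ∈ [0, S], i = 1,…,n. Define z₀ := z − Σ_{i=1}^n z_i, the storage function W(s) := ½ ∬_𝒞 p(x, y) ( z₀(x,y,s)ᵀ K₀ z₀(x,y,s) + Σ_{i=1}^n z_i(x,y,s)ᵀ K_i z_i(x,y,s) ) dx dy, and the total force f := K₀ z₀. Then for every s ∈ [0, S], W(s) − W(0) ≤ ∫₀ˢ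 ( −∬_𝒞 p(x, y) f(x,y,s′)ᵀ v̄(x,y,s′) dx dy ) ds′. -/

import Mathlib

open Matrix MeasureTheory

/-- The regularised Euclidean norm `‖y‖_{2,ε} = √(‖y‖₂² + ε)` on `ℝ²`. -/
noncomputable def regNorm (ε : ℝ) (y : Fin 2 → ℝ) : ℝ := Real.sqrt (y ⬝ᵥ y + ε)

/-!
Let `E` be twice the elastic energy density of a bristle, `w = p E` and `D = ∂/∂s − ∂/∂x`. Then
`D w = p D E − (∂p/∂x) E`, where the last term is nonpositive. By the chain rule `p D E` is `2 p`
times the power `fᵀ D z` minus the powers `(K₀ z₀ − Kᵢ zᵢ)ᵀ D zᵢ` delivered to the dashpots. The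
latter are nonnegative and friction gives `fᵀ D z ≤ −fᵀ v̄`, so that `D w ≤ −2 p fᵀ v̄` in the
interior, and on the closed box by continuity of the derivatives of `w`.

Integrate `∂w/∂s = D w + ∂w/∂x` over the contact area: the last term contributes only the
difference of the values of `w` on the edges, which has a good sign because `w` vanishes on the
leading edge and is nonnegative on the trailing one. Integration in time concludes.
-/

section ParametricIntegral

variable {X E : Type*} [TopologicalSpace X] [T2Space X]
  [MeasurableSpace X] [BorelSpace X] {μ : Measure X} [IsFiniteMeasureOnCompacts μ]
  [NormedAddCommGroup E] {A : Set X} {t₀ t₁ : ℝ}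

lemma integrableOn_slice (hA : IsCompact A) {g : X × ℝ → E}
    (hg : ContinuousOn g (A ×ˢ Set.Icc t₀ t₁)) {t : ℝ} (ht : t ∈ Set.Icc t₀ t₁) :
    IntegrableOn (fun q => g (q, t)) A μ :=
  (hg.comp (by fun_prop) fun _ hq => ⟨hq, ht⟩).integrableOn_compact hA

variable [SFinite μ]

lemma integrable_prod_restrict_Ioc (hA : IsCompact A) {g : X × ℝ → E}
    (hg : ContinuousOn g (A ×ˢ Set.Icc t₀ t₁)) :
    Integrable g ((μ.restrict A).prod (volume.restrict (Set.Ioc t₀ t₁))) := by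
  rw [Measure.prod_restrict]
  exact (hg.integrableOn_compact (hA.prod isCompact_Icc)).mono_set
    (Set.prod_mono_right Set.Ioc_subset_Icc_self)

variable [NormedSpace ℝ E]

lemma intervalIntegrable_setIntegral (hA : IsCompact A) (ht : t₀ ≤ t₁) {g : X × ℝ → E}
    (hg : ContinuousOn g (A ×ˢ Set.Icc t₀ t₁)) :
    IntervalIntegrable (fun t => ∫ q in A, g (q, t) ∂μ) volume t₀ t₁ :=
  (intervalIntegrable_iff_integrableOn_Ioc_of_le ht).2
    (integrable_prod_restrict_Ioc hA hg).integral_prod_right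

lemma setIntegral_sub_setIntegral_eq_intervalIntegral [CompleteSpace E] (hA : IsCompact A)
    (ht : t₀ ≤ t₁) {w w' : X × ℝ → E} (hw : ContinuousOn w (A ×ˢ Set.Icc t₀ t₁))
    (hw' : ContinuousOn w' (A ×ˢ Set.Icc t₀ t₁))
    (hderiv : ∀ q ∈ A, ∀ t ∈ Set.Ioo t₀ t₁, HasDerivAt (fun t => w (q, t)) (w' (q, t)) t) :
    (∫ q in A, w (q, t₁) ∂μ) - ∫ q in A, w (q, t₀) ∂μ =
      ∫ t in t₀..t₁, ∫ q in A, w' (q, t) ∂μ := by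
  have slice {g : X × ℝ → E} (hg : ContinuousOn g (A ×ˢ Set.Icc t₀ t₁)) {q : X} (hq : q ∈ A) :
      ContinuousOn (fun t => g (q, t)) (Set.Icc t₀ t₁) :=
    hg.comp (by fun_prop) fun _ ht => ⟨hq, ht⟩
  calc (∫ q in A, w (q, t₁) ∂μ) - ∫ q in A, w (q, t₀) ∂μ
      = ∫ q in A, (w (q, t₁) - w (q, t₀)) ∂μ :=
        (integral_sub (integrableOn_slice hA hw (Set.right_mem_Icc.2 ht))
          (integrableOn_slice hA hw (Set.left_mem_Icc.2 ht))).symm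
    _ = ∫ q in A, (∫ t in Set.Ioc t₀ t₁, w' (q, t)) ∂μ := by
        refine setIntegral_congr_fun hA.measurableSet fun q hq => ?_
        rw [← intervalIntegral.integral_of_le ht]
        exact (intervalIntegral.integral_eq_sub_of_hasDerivAt_of_le ht (slice hw hq)
          (hderiv q hq) ((slice hw' hq).intervalIntegrable_of_Icc ht)).symm
    _ = ∫ t in t₀..t₁, ∫ q in A, w' (q, t) ∂μ := by
        rw [intervalIntegral.integral_of_le ht]
        exact integral_integral_swap (f := fun q t => w' (q, t))
          (integrable_prod_restrict_Ioc hA hw')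

end ParametricIntegral

lemma setIntegral_rectangle_eq_of_hasDerivAt_fst {E : Type*} [NormedAddCommGroup E]
    [NormedSpace ℝ E] [CompleteSpace E] {x₀ x₁ y₀ y₁ : ℝ} (hx : x₀ ≤ x₁) {u u' : ℝ × ℝ → E}
    (hu : ContinuousOn u (Set.Icc x₀ x₁ ×ˢ Set.Icc y₀ y₁))
    (hu' : ContinuousOn u' (Set.Icc x₀ x₁ ×ˢ Set.Icc y₀ y₁))
    (hderiv : ∀ y ∈ Set.Icc y₀ y₁, ∀ x ∈ Set.Ioo x₀ x₁,
      HasDerivAt (fun x => u (x, y)) (u' (x, y)) x) :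
    ∫ q in Set.Icc x₀ x₁ ×ˢ Set.Icc y₀ y₁, u' q =
      (∫ y in Set.Icc y₀ y₁, u (x₁, y)) - ∫ y in Set.Icc y₀ y₁, u (x₀, y) := by
  have swap {g : ℝ × ℝ → E} (hg : ContinuousOn g (Set.Icc x₀ x₁ ×ˢ Set.Icc y₀ y₁)) :
      ContinuousOn (fun q => g q.swap) (Set.Icc y₀ y₁ ×ˢ Set.Icc x₀ x₁) :=
    hg.comp continuous_swap.continuousOn fun _ hq => ⟨hq.2, hq.1⟩
  have hR : IsCompact (Set.Icc x₀ x₁ ×ˢ Set.Icc y₀ y₁) := isCompact_Icc.prod isCompact_Icc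
  calc ∫ q in Set.Icc x₀ x₁ ×ˢ Set.Icc y₀ y₁, u' q
      = ∫ x in Set.Icc x₀ x₁, ∫ y in Set.Icc y₀ y₁, u' (x, y) :=
        setIntegral_prod u' (hu'.integrableOn_compact hR)
    _ = ∫ x in x₀..x₁, ∫ y in Set.Icc y₀ y₁, u' (x, y) := by
        rw [intervalIntegral.integral_of_le hx, integral_Icc_eq_integral_Ioc]
    _ = (∫ y in Set.Icc y₀ y₁, u (x₁, y)) - ∫ y in Set.Icc y₀ y₁, u (x₀, y) :=
        (setIntegral_sub_setIntegral_eq_intervalIntegral isCompact_Icc hx (swap hu) (swap hu')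
          hderiv).symm

lemma fderivWithin_le_of_lineDeriv_le_on_interior {E : Type*} [NormedAddCommGroup E]
    [NormedSpace ℝ E] {B : Set E} (hB : Convex ℝ B) (hB' : (interior B).Nonempty)
    {w h : E → ℝ} (hw : ContDiffOn ℝ 1 w B) (hh : ContinuousOn h B) {e : E}
    (hle : ∀ q ∈ interior B, lineDeriv ℝ w q e ≤ h q) {q : E} (hq : q ∈ B) :
    fderivWithin ℝ w B q e ≤ h q := by
  have hD : ContinuousOn (fun q => fderivWithin ℝ w B q e) B :=
    (hw.continuousOn_fderivWithin (uniqueDiffOn_convex hB hB') le_rfl).clm_apply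
      continuousOn_const
  have hcl : q ∈ closure (interior B) := by
    rw [hB.closure_interior_eq_closure_of_nonempty_interior hB']
    exact subset_closure hq
  refine ContinuousWithinAt.closure_le hcl ((hD q hq).mono interior_subset)
    ((hh q hq).mono interior_subset) fun r hr => ?_
  have hnhds : B ∈ nhds r := mem_interior_iff_mem_nhds.1 hr
  rw [fderivWithin_of_mem_nhds hnhds,
    ← ((hw.contDiffAt hnhds).differentiableAt one_ne_zero).lineDeriv_eq_fderiv]
  exact hle r hr

lemma hasDerivAt_prodMk_prodMk_left (x y t : ℝ) :
    HasDerivAt (fun x' : ℝ => ((x', y), t)) ((1, 0), 0) x :=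
  ((hasDerivAt_id x).prodMk (hasDerivAt_const x y)).prodMk (hasDerivAt_const x t)

lemma hasDerivAt_prodMk_right {X : Type*} [NormedAddCommGroup X] [NormedSpace ℝ X] (q : X)
    (t : ℝ) : HasDerivAt (fun t' : ℝ => (q, t')) (0, 1) t :=
  (hasDerivAt_const t q).prodMk (hasDerivAt_id t)

/-- The direction of the operator `D = ∂/∂s − ∂/∂x` in the space of points `((x, y), s)`. -/
def characteristicDir : (ℝ × ℝ) × ℝ := ((-1, 0), 1)

lemma hasLineDerivAt_characteristicDir {F : Type*} [NormedAddCommGroup F] [NormedSpace ℝ F]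
    {u : (ℝ × ℝ) × ℝ → F} {x y s : ℝ} {ux us : F} (hu : DifferentiableAt ℝ u ((x, y), s))
    (hux : HasDerivAt (fun x' => u ((x', y), s)) ux x)
    (hus : HasDerivAt (fun s' => u ((x, y), s')) us s) :
    HasLineDerivAt ℝ u (us - ux) ((x, y), s) characteristicDir := by
  have hdir : characteristicDir = (0, 1) - ((1, 0), 0) := by simp [characteristicDir]
  rw [hus.unique (hu.hasFDerivAt.comp_hasDerivAt s (hasDerivAt_prodMk_right (x, y) s)),
    hux.unique (hu.hasFDerivAt.comp_hasDerivAt x (hasDerivAt_prodMk_prodMk_left x y s)),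
    ← map_sub, ← hdir]
  exact hu.hasFDerivAt.hasLineDerivAt characteristicDir

lemma setIntegral_sub_setIntegral_le_of_fderivWithin_le {X : Type*} [NormedAddCommGroup X]
    [NormedSpace ℝ X] [MeasurableSpace X] [BorelSpace X] {μ : Measure X}
    [IsFiniteMeasureOnCompacts μ] [SFinite μ] {R : Set X} (hR : IsCompact R)
    (hRd : UniqueDiffOn ℝ R) {t₀ t₁ : ℝ} (ht : t₀ < t₁) {w h : X × ℝ → ℝ}
    (hw : ContDiffOn ℝ 1 w (R ×ˢ Set.Icc t₀ t₁)) (hh : ContinuousOn h (R ×ˢ Set.Icc t₀ t₁))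
    (hle : ∀ t ∈ Set.Icc t₀ t₁,
      ∫ q in R, fderivWithin ℝ w (R ×ˢ Set.Icc t₀ t₁) (q, t) (0, 1) ∂μ ≤ ∫ q in R, h (q, t) ∂μ)
    {s : ℝ} (hs : s ∈ Set.Icc t₀ t₁) :
    (∫ q in R, w (q, s) ∂μ) - ∫ q in R, w (q, t₀) ∂μ ≤ ∫ t in t₀..s, ∫ q in R, h (q, t) ∂μ := by
  set D := fderivWithin ℝ w (R ×ˢ Set.Icc t₀ t₁)
  have hsub : R ×ˢ Set.Icc t₀ s ⊆ R ×ˢ Set.Icc t₀ t₁ :=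
    Set.prod_mono_right (Set.Icc_subset_Icc_right hs.2)
  have hDc : ContinuousOn (fun q => D q (0, 1)) (R ×ˢ Set.Icc t₀ s) :=
    ((hw.continuousOn_fderivWithin (hRd.prod (uniqueDiffOn_Icc ht)) le_rfl).clm_apply
      continuousOn_const).mono hsub
  have hderiv : ∀ q ∈ R, ∀ t ∈ Set.Ioo t₀ s,
      HasDerivAt (fun t => w (q, t)) (D (q, t) (0, 1)) t := by
    intro q hq t ht'
    have hmem : ∀ᶠ t' in nhds t, (q, t') ∈ R ×ˢ Set.Icc t₀ t₁ :=
      Filter.mem_of_superset (Icc_mem_nhds ht'.1 (ht'.2.trans_le hs.2)) fun _ h' => ⟨hq, h'⟩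
    exact (hw.differentiableOn one_ne_zero _ hmem.self_of_nhds).hasFDerivWithinAt.comp_hasDerivAt
      t (hasDerivAt_prodMk_right q t) hmem
  rw [setIntegral_sub_setIntegral_eq_intervalIntegral hR hs.1 (hw.continuousOn.mono hsub)
    hDc hderiv]
  exact intervalIntegral.integral_mono_on hs.1 (intervalIntegrable_setIntegral hR hs.1 hDc)
    (intervalIntegrable_setIntegral hR hs.1 (hh.mono hsub))
    fun t ht' => hle t ⟨ht'.1, ht'.2.trans hs.2⟩

lemma contDiffOn_comp_prodAssoc {E₁ E₂ E₃ F : Type*} [NormedAddCommGroup E₁] [NormedSpace ℝ E₁]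
    [NormedAddCommGroup E₂] [NormedSpace ℝ E₂] [NormedAddCommGroup E₃] [NormedSpace ℝ E₃]
    [NormedAddCommGroup F] [NormedSpace ℝ F] {m : WithTop ℕ∞} {f : E₁ × E₂ × E₃ → F} {A : Set E₁}
    {B : Set E₂} {C : Set E₃} (hf : ContDiffOn ℝ m f (A ×ˢ B ×ˢ C)) :
    ContDiffOn ℝ m (fun q : (E₁ × E₂) × E₃ => f (q.1.1, q.1.2, q.2)) ((A ×ˢ B) ×ˢ C) :=
  hf.comp (by fun_prop) fun _ hq => ⟨hq.1.1, hq.1.2, hq.2⟩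

section TransportInequality

variable {x₀ x₁ y₀ y₁ t₀ t₁ : ℝ} {w h : (ℝ × ℝ) × ℝ → ℝ}

lemma setIntegral_fderivWithin_fst_nonpos (hx : x₀ < x₁) (hy : y₀ < y₁) (ht : t₀ < t₁)
    (hw : ContDiffOn ℝ 1 w ((Set.Icc x₀ x₁ ×ˢ Set.Icc y₀ y₁) ×ˢ Set.Icc t₀ t₁))
    (hflux : ∀ y ∈ Set.Icc y₀ y₁, ∀ t ∈ Set.Icc t₀ t₁, w ((x₁, y), t) ≤ w ((x₀, y), t))
    {t : ℝ} (htI : t ∈ Set.Icc t₀ t₁) :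
    ∫ q in Set.Icc x₀ x₁ ×ˢ Set.Icc y₀ y₁,
      fderivWithin ℝ w ((Set.Icc x₀ x₁ ×ˢ Set.Icc y₀ y₁) ×ˢ Set.Icc t₀ t₁) (q, t)
        ((1, 0), 0) ≤ 0 := by
  set B := (Set.Icc x₀ x₁ ×ˢ Set.Icc y₀ y₁) ×ˢ Set.Icc t₀ t₁
  have hU : UniqueDiffOn ℝ B :=
    ((uniqueDiffOn_Icc hx).prod (uniqueDiffOn_Icc hy)).prod (uniqueDiffOn_Icc ht)
  have slice {g : (ℝ × ℝ) × ℝ → ℝ} (hg : ContinuousOn g B) :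
      ContinuousOn (fun q => g (q, t)) (Set.Icc x₀ x₁ ×ˢ Set.Icc y₀ y₁) :=
    hg.comp (by fun_prop) fun _ hq => ⟨hq, htI⟩
  have edge {x : ℝ} (hxI : x ∈ Set.Icc x₀ x₁) :
      IntegrableOn (fun y => w ((x, y), t)) (Set.Icc y₀ y₁) :=
    ((slice hw.continuousOn).comp (by fun_prop) fun _ hy => ⟨hxI, hy⟩).integrableOn_Icc
  rw [setIntegral_rectangle_eq_of_hasDerivAt_fst hx.le (slice hw.continuousOn)
    (slice ((hw.continuousOn_fderivWithin hU le_rfl).clm_apply continuousOn_const)),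
    sub_nonpos]
  · exact setIntegral_mono_on (edge (Set.right_mem_Icc.2 hx.le))
      (edge (Set.left_mem_Icc.2 hx.le)) measurableSet_Icc fun y hy => hflux y hy t htI
  · intro y hyI x hxI
    have hmem : ∀ᶠ x' in nhds x, ((x', y), t) ∈ B :=
      Filter.mem_of_superset (Icc_mem_nhds hxI.1 hxI.2) fun _ hx' => ⟨⟨hx', hyI⟩, htI⟩
    exact (hw.differentiableOn one_ne_zero _ hmem.self_of_nhds).hasFDerivWithinAt.comp_hasDerivAt
      x (hasDerivAt_prodMk_prodMk_left x y t) hmem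

lemma setIntegral_sub_setIntegral_le_of_transport_le (hx : x₀ < x₁) (hy : y₀ < y₁)
    (hw : ContDiffOn ℝ 1 w ((Set.Icc x₀ x₁ ×ˢ Set.Icc y₀ y₁) ×ˢ Set.Icc t₀ t₁))
    (hh : ContinuousOn h ((Set.Icc x₀ x₁ ×ˢ Set.Icc y₀ y₁) ×ˢ Set.Icc t₀ t₁))
    (hle : ∀ x ∈ Set.Ioo x₀ x₁, ∀ y ∈ Set.Ioo y₀ y₁, ∀ t ∈ Set.Ioo t₀ t₁,
      lineDeriv ℝ w ((x, y), t) characteristicDir ≤ h ((x, y), t))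
    (hflux : ∀ y ∈ Set.Icc y₀ y₁, ∀ t ∈ Set.Icc t₀ t₁, w ((x₁, y), t) ≤ w ((x₀, y), t))
    (ht : t₀ < t₁) {s : ℝ} (hs : s ∈ Set.Icc t₀ t₁) :
    (∫ q in Set.Icc x₀ x₁ ×ˢ Set.Icc y₀ y₁, w (q, s)) -
        ∫ q in Set.Icc x₀ x₁ ×ˢ Set.Icc y₀ y₁, w (q, t₀) ≤
      ∫ t in t₀..s, ∫ q in Set.Icc x₀ x₁ ×ˢ Set.Icc y₀ y₁, h (q, t) := by
  set R := Set.Icc x₀ x₁ ×ˢ Set.Icc y₀ y₁ with hR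
  set D := fderivWithin ℝ w (R ×ˢ Set.Icc t₀ t₁)
  have hRc : IsCompact R := isCompact_Icc.prod isCompact_Icc
  have hint : interior (R ×ˢ Set.Icc t₀ t₁) =
      (Set.Ioo x₀ x₁ ×ˢ Set.Ioo y₀ y₁) ×ˢ Set.Ioo t₀ t₁ := by
    simp only [hR, interior_prod_eq, interior_Icc]
  have hconv : Convex ℝ (R ×ˢ Set.Icc t₀ t₁) :=
    ((convex_Icc x₀ x₁).prod (convex_Icc y₀ y₁)).prod (convex_Icc t₀ t₁)
  have hne : (interior (R ×ˢ Set.Icc t₀ t₁)).Nonempty := by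
    rw [hint]
    exact ((Set.nonempty_Ioo.2 hx).prod (Set.nonempty_Ioo.2 hy)).prod (Set.nonempty_Ioo.2 ht)
  have hDc (e : (ℝ × ℝ) × ℝ) : ContinuousOn (fun q => D q e) (R ×ˢ Set.Icc t₀ t₁) :=
    (hw.continuousOn_fderivWithin (uniqueDiffOn_convex hconv hne) le_rfl).clm_apply
      continuousOn_const
  have hDle : ∀ q ∈ R ×ˢ Set.Icc t₀ t₁, D q (0, 1) ≤ h q + D q ((1, 0), 0) := by
    intro q hq
    have hdir : ((0, 0), 1) = characteristicDir + ((1, 0), 0) := by simp [characteristicDir]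
    rw [← Prod.mk_zero_zero, hdir, map_add, add_le_add_iff_right]
    refine fderivWithin_le_of_lineDeriv_le_on_interior hconv hne hw hh (fun r hr => ?_) hq
    rw [hint] at hr
    exact hle _ hr.1.1 _ hr.1.2 _ hr.2
  refine setIntegral_sub_setIntegral_le_of_fderivWithin_le hRc
    ((uniqueDiffOn_Icc hx).prod (uniqueDiffOn_Icc hy)) ht hw hh (fun t htI => ?_) hs
  have hhi : IntegrableOn (fun q => h (q, t)) R := integrableOn_slice hRc hh htI
  have hDi (e : (ℝ × ℝ) × ℝ) : IntegrableOn (fun q => D (q, t) e) R :=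
    integrableOn_slice hRc (hDc e) htI
  calc ∫ q in R, D (q, t) (0, 1)
      ≤ ∫ q in R, (h (q, t) + D (q, t) ((1, 0), 0)) :=
        setIntegral_mono_on (hDi _) (hhi.add (hDi _)) hRc.measurableSet
          fun q hq => hDle (q, t) ⟨hq, htI⟩
    _ = (∫ q in R, h (q, t)) + ∫ q in R, D (q, t) ((1, 0), 0) := integral_add hhi (hDi _)
    _ ≤ ∫ q in R, h (q, t) :=
        add_le_of_nonpos_right (setIntegral_fderivWithin_fst_nonpos hx hy ht hw hflux htI)

end TransportInequality

section BristleEnergy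

variable {ι d : Type*} [Fintype ι] [Fintype d]

lemma hasDerivAt_dotProduct {u v : ℝ → d → ℝ} {u' v' : d → ℝ} {t : ℝ} (hu : HasDerivAt u u' t)
    (hv : HasDerivAt v v' t) :
    HasDerivAt (fun t => u t ⬝ᵥ v t) (u' ⬝ᵥ v t + u t ⬝ᵥ v') t := by
  simp only [dotProduct, ← Finset.sum_add_distrib]
  exact HasDerivAt.fun_sum fun i _ => (hasDerivAt_pi.1 hu i).mul (hasDerivAt_pi.1 hv i)

lemma continuousOn_dotProduct {E : Type*} [TopologicalSpace E] {u v : E → d → ℝ} {B : Set E}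
    (hu : ContinuousOn u B) (hv : ContinuousOn v B) : ContinuousOn (fun q => u q ⬝ᵥ v q) B :=
  (continuous_fst.dotProduct continuous_snd).comp_continuousOn (hu.prodMk hv)

lemma hasDerivAt_dotProduct_mulVec_self {A : Matrix d d ℝ} (hA : A.IsSymm) {u : ℝ → d → ℝ}
    {u' : d → ℝ} {t : ℝ} (hu : HasDerivAt u u' t) :
    HasDerivAt (fun t => u t ⬝ᵥ A *ᵥ u t) (2 * (A *ᵥ u t ⬝ᵥ u')) t := by
  have hAu : HasDerivAt (fun t => A *ᵥ u t) (A *ᵥ u') t :=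
    A.mulVecLin.toContinuousLinearMap.hasFDerivAt.comp_hasDerivAt t hu
  refine (hasDerivAt_dotProduct hu hAu).congr_deriv ?_
  rw [dotProduct_mulVec (u t), ← mulVec_transpose, hA.eq, dotProduct_comm u', two_mul]

lemma contDiffOn_dotProduct_mulVec_self {E : Type*} [NormedAddCommGroup E] [NormedSpace ℝ E]
    {m : WithTop ℕ∞} (A : Matrix d d ℝ) {u : E → d → ℝ} {B : Set E} (hu : ContDiffOn ℝ m u B) :
    ContDiffOn ℝ m (fun q => u q ⬝ᵥ A *ᵥ u q) B := by
  have hui := contDiffOn_pi.1 hu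
  simp only [mulVec, dotProduct]
  fun_prop

/-- The quadratic form `z₀ᵀ K₀ z₀ + ∑ zᵢᵀ Kᵢ zᵢ` with `z₀ = z − ∑ zᵢ`: twice the elastic energy
density of a generalised Kelvin-Voigt bristle with total deflection `z`. -/
def gkvForm (K₀ : Matrix d d ℝ) (K : ι → Matrix d d ℝ) (z : d → ℝ) (zi : ι → d → ℝ) : ℝ :=
  (z - ∑ i, zi i) ⬝ᵥ K₀ *ᵥ (z - ∑ i, zi i) + ∑ i, zi i ⬝ᵥ K i *ᵥ zi i

variable {K₀ : Matrix d d ℝ} {K : ι → Matrix d d ℝ}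

lemma gkvForm_zero : gkvForm K₀ K 0 (fun _ => 0) = 0 := by
  simp [gkvForm]

lemma gkvForm_nonneg (hK₀ : K₀.PosSemidef) (hK : ∀ i, (K i).PosSemidef) (z : d → ℝ)
    (zi : ι → d → ℝ) : 0 ≤ gkvForm K₀ K z zi :=
  add_nonneg (hK₀.dotProduct_mulVec_nonneg _)
    (Finset.sum_nonneg fun i _ => (hK i).dotProduct_mulVec_nonneg _)

lemma contDiffOn_gkvForm {E : Type*} [NormedAddCommGroup E] [NormedSpace ℝ E] {m : WithTop ℕ∞}
    {z : E → d → ℝ} {zi : ι → E → d → ℝ} {B : Set E} (hz : ContDiffOn ℝ m z B)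
    (hzi : ∀ i, ContDiffOn ℝ m (zi i) B) :
    ContDiffOn ℝ m (fun q => gkvForm K₀ K (z q) fun i => zi i q) B :=
  (contDiffOn_dotProduct_mulVec_self K₀ (hz.sub (ContDiffOn.sum fun i _ => hzi i))).add
    (ContDiffOn.sum fun i _ => contDiffOn_dotProduct_mulVec_self (K i) (hzi i))

lemma hasDerivAt_gkvForm (hK₀ : K₀.IsSymm) (hK : ∀ i, (K i).IsSymm) {z : ℝ → d → ℝ}
    {zi : ι → ℝ → d → ℝ} {z' : d → ℝ} {zi' : ι → d → ℝ} {t : ℝ} (hz : HasDerivAt z z' t)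
    (hzi : ∀ i, HasDerivAt (zi i) (zi' i) t) :
    HasDerivAt (fun t => gkvForm K₀ K (z t) fun i => zi i t)
      (2 * (K₀ *ᵥ (z t - ∑ i, zi i t) ⬝ᵥ z' -
        ∑ i, (K₀ *ᵥ (z t - ∑ i, zi i t) - K i *ᵥ zi i t) ⬝ᵥ zi' i)) t := by
  have hz₀ : HasDerivAt (fun t => z t - ∑ i, zi i t) (z' - ∑ i, zi' i) t :=
    hz.sub (HasDerivAt.fun_sum fun i _ => hzi i)
  refine ((hasDerivAt_dotProduct_mulVec_self hK₀ hz₀).add (HasDerivAt.fun_sum fun i _ =>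
    hasDerivAt_dotProduct_mulVec_self (hK i) (hzi i))).congr_deriv ?_
  simp only [dotProduct_sub, sub_dotProduct, dotProduct_sum, Finset.sum_sub_distrib,
    ← Finset.mul_sum]
  ring

lemma lineDeriv_mul_gkvForm_le {E : Type*} [AddCommGroup E] [Module ℝ E]
    (hK₀ : K₀.PosSemidef) (hK : ∀ i, (K i).PosSemidef) {p : E → ℝ} {z : E → d → ℝ}
    {zi : ι → E → d → ℝ} {q e : E} {p' : ℝ} {z' v : d → ℝ} {zi' : ι → d → ℝ}
    (hp : HasLineDerivAt ℝ p p' q e) (hz : HasLineDerivAt ℝ z z' q e)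
    (hzi : ∀ i, HasLineDerivAt ℝ (zi i) (zi' i) q e) (hp0 : 0 ≤ p q) (hp' : p' ≤ 0)
    (hz' : K₀ *ᵥ (z q - ∑ i, zi i q) ⬝ᵥ z' ≤ -(K₀ *ᵥ (z q - ∑ i, zi i q) ⬝ᵥ v))
    (hzi' : ∀ i, 0 ≤ (K₀ *ᵥ (z q - ∑ j, zi j q) - K i *ᵥ zi i q) ⬝ᵥ zi' i) :
    lineDeriv ℝ (fun q => p q * gkvForm K₀ K (z q) fun i => zi i q) q e ≤
      2 * -(p q * (K₀ *ᵥ (z q - ∑ i, zi i q) ⬝ᵥ v)) := by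
  have hsymm {A : Matrix d d ℝ} (hA : A.PosSemidef) : A.IsSymm := by
    simpa using hA.isHermitian
  have hderiv : HasLineDerivAt ℝ (fun q => p q * gkvForm K₀ K (z q) fun i => zi i q)
      (p' * gkvForm K₀ K (z q) (fun i => zi i q) +
        p q * (2 * (K₀ *ᵥ (z q - ∑ i, zi i q) ⬝ᵥ z' -
          ∑ i, (K₀ *ᵥ (z q - ∑ j, zi j q) - K i *ᵥ zi i q) ⬝ᵥ zi' i))) q e := by
    simpa only [HasLineDerivAt, zero_smul, add_zero] using HasDerivAt.fun_mul hp
      (hasDerivAt_gkvForm (hsymm hK₀) (fun i => hsymm (hK i)) hz hzi)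
  rw [hderiv.lineDeriv]
  have hpressure := mul_nonpos_of_nonpos_of_nonneg hp'
    (gkvForm_nonneg hK₀ hK (z q) fun i => zi i q)
  have hdashpots := Finset.sum_nonneg fun i (_ : i ∈ Finset.univ) => hzi' i
  have hpower := mul_le_mul_of_nonneg_left (hz'.trans' (sub_le_self _ hdashpots)) hp0
  linarith

lemma lineDeriv_characteristicDir_mul_gkvForm_le (hK₀ : K₀.PosSemidef)
    (hK : ∀ i, (K i).PosSemidef) {p : ℝ × ℝ → ℝ} {z : ℝ → ℝ → ℝ → d → ℝ}
    {zi : ι → ℝ → ℝ → ℝ → d → ℝ} {x y s : ℝ} {zx zs v : d → ℝ} {zix zis : ι → d → ℝ}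
    (hp : DifferentiableAt ℝ p (x, y)) (hp0 : 0 ≤ p (x, y))
    (hpx : 0 ≤ deriv (fun x' => p (x', y)) x)
    (hz : DifferentiableAt ℝ (fun q : (ℝ × ℝ) × ℝ => z q.1.1 q.1.2 q.2) ((x, y), s))
    (hzi : ∀ i, DifferentiableAt ℝ (fun q : (ℝ × ℝ) × ℝ => zi i q.1.1 q.1.2 q.2) ((x, y), s))
    (hzx : HasDerivAt (fun x' => z x' y s) zx x) (hzs : HasDerivAt (fun s' => z x y s') zs s)
    (hzix : ∀ i, HasDerivAt (fun x' => zi i x' y s) (zix i) x)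
    (hzis : ∀ i, HasDerivAt (fun s' => zi i x y s') (zis i) s)
    (hfriction : K₀ *ᵥ (z x y s - ∑ i, zi i x y s) ⬝ᵥ (zs - zx) ≤
      -(K₀ *ᵥ (z x y s - ∑ i, zi i x y s) ⬝ᵥ v))
    (hdashpot : ∀ i, 0 ≤ (K₀ *ᵥ (z x y s - ∑ j, zi j x y s) - K i *ᵥ zi i x y s) ⬝ᵥ
      (zis i - zix i)) :
    lineDeriv ℝ (fun q : (ℝ × ℝ) × ℝ =>
        p q.1 * gkvForm K₀ K (z q.1.1 q.1.2 q.2) fun i => zi i q.1.1 q.1.2 q.2)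
        ((x, y), s) characteristicDir ≤
      2 * -(p (x, y) * (K₀ *ᵥ (z x y s - ∑ i, zi i x y s) ⬝ᵥ v)) := by
  have hp_line : DifferentiableAt ℝ (fun x' => p (x', y)) x :=
    hp.comp (f := fun x' => (x', y)) x (by fun_prop)
  have hp_char : HasLineDerivAt ℝ (fun q : (ℝ × ℝ) × ℝ => p q.1)
      (0 - deriv (fun x' => p (x', y)) x) ((x, y), s) characteristicDir :=
    hasLineDerivAt_characteristicDir (hp.comp (f := Prod.fst) ((x, y), s) differentiableAt_fst)
      hp_line.hasDerivAt (hasDerivAt_const s (p (x, y)))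
  exact lineDeriv_mul_gkvForm_le hK₀ hK hp_char (hasLineDerivAt_characteristicDir hz hzx hzs)
    (fun i => hasLineDerivAt_characteristicDir (hzi i) (hzix i) (hzis i)) hp0
    (by linarith) hfriction hdashpot

end BristleEnergy

section ConstitutiveLaws

variable {d : Type*} [Fintype d] [DecidableEq d]

lemma dotProduct_friction_le {M : Matrix d d ℝ} (hM : M.IsHermitian) {c : ℝ} (hc : 0 ≤ c)
    (f v : d → ℝ) : f ⬝ᵥ (-(c • ((M * M)⁻¹ *ᵥ f)) - v) ≤ -(f ⬝ᵥ v) := by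
  have hMM : (M * M).PosSemidef := by
    simpa only [hM.eq] using posSemidef_conjTranspose_mul_self M
  have hdiss : 0 ≤ c * (f ⬝ᵥ (M * M)⁻¹ *ᵥ f) :=
    mul_nonneg hc (hMM.inv.dotProduct_mulVec_nonneg f)
  rw [dotProduct_sub, dotProduct_neg, dotProduct_smul, smul_eq_mul]
  linarith

lemma dotProduct_dashpot_nonneg {C : Matrix d d ℝ} (hC : C.PosSemidef) {c : ℝ} (hc : 0 ≤ c)
    (g : d → ℝ) : 0 ≤ g ⬝ᵥ (c • (C⁻¹ *ᵥ g)) := by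
  rw [dotProduct_smul]
  exact mul_nonneg hc (hC.inv.dotProduct_mulVec_nonneg g)

end ConstitutiveLaws

theorem frbd_gkv_rectangular_passivity_general {ι d : Type*} [Fintype ι] [Fintype d]
    {K₀ : Matrix d d ℝ} {K : ι → Matrix d d ℝ} (hK₀ : K₀.PosSemidef)
    (hK : ∀ i, (K i).PosSemidef) {x₀ x₁ y₀ y₁ S : ℝ} (hx : x₀ < x₁) (hy : y₀ < y₁) (hS : 0 < S)
    {p : ℝ × ℝ → ℝ} (hp : ContDiffOn ℝ 1 p (Set.Icc x₀ x₁ ×ˢ Set.Icc y₀ y₁))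
    (hp0 : ∀ q ∈ Set.Icc x₀ x₁ ×ˢ Set.Icc y₀ y₁, 0 ≤ p q)
    (hpx : ∀ x ∈ Set.Ioo x₀ x₁, ∀ y ∈ Set.Ioo y₀ y₁, 0 ≤ deriv (fun x' => p (x', y)) x)
    {v : ℝ → ℝ → ℝ → d → ℝ}
    (hv : ContinuousOn (fun q : (ℝ × ℝ) × ℝ => v q.1.1 q.1.2 q.2)
      ((Set.Icc x₀ x₁ ×ˢ Set.Icc y₀ y₁) ×ˢ Set.Icc 0 S))
    {z : ℝ → ℝ → ℝ → d → ℝ} {zi : ι → ℝ → ℝ → ℝ → d → ℝ}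
    (hz : ContDiffOn ℝ 1 (fun q : ℝ × ℝ × ℝ => z q.1 q.2.1 q.2.2)
      (Set.Icc x₀ x₁ ×ˢ Set.Icc y₀ y₁ ×ˢ Set.Icc 0 S))
    (hzi : ∀ i, ContDiffOn ℝ 1 (fun q : ℝ × ℝ × ℝ => zi i q.1 q.2.1 q.2.2)
      (Set.Icc x₀ x₁ ×ˢ Set.Icc y₀ y₁ ×ˢ Set.Icc 0 S))
    {zx zs : ℝ → ℝ → ℝ → d → ℝ} {zix zis : ι → ℝ → ℝ → ℝ → d → ℝ}
    (hzx : ∀ x ∈ Set.Ioo x₀ x₁, ∀ y ∈ Set.Ioo y₀ y₁, ∀ s ∈ Set.Ioo 0 S,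
      HasDerivAt (fun x' => z x' y s) (zx x y s) x)
    (hzs : ∀ x ∈ Set.Ioo x₀ x₁, ∀ y ∈ Set.Ioo y₀ y₁, ∀ s ∈ Set.Ioo 0 S,
      HasDerivAt (fun s' => z x y s') (zs x y s) s)
    (hzix : ∀ i, ∀ x ∈ Set.Ioo x₀ x₁, ∀ y ∈ Set.Ioo y₀ y₁, ∀ s ∈ Set.Ioo 0 S,
      HasDerivAt (fun x' => zi i x' y s) (zix i x y s) x)
    (hzis : ∀ i, ∀ x ∈ Set.Ioo x₀ x₁, ∀ y ∈ Set.Ioo y₀ y₁, ∀ s ∈ Set.Ioo 0 S,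
      HasDerivAt (fun s' => zi i x y s') (zis i x y s) s)
    (hfriction : ∀ x ∈ Set.Ioo x₀ x₁, ∀ y ∈ Set.Ioo y₀ y₁, ∀ s ∈ Set.Ioo 0 S,
      K₀ *ᵥ (z x y s - ∑ i, zi i x y s) ⬝ᵥ (zs x y s - zx x y s) ≤
        -(K₀ *ᵥ (z x y s - ∑ i, zi i x y s) ⬝ᵥ v x y s))
    (hdashpot : ∀ i, ∀ x ∈ Set.Ioo x₀ x₁, ∀ y ∈ Set.Ioo y₀ y₁, ∀ s ∈ Set.Ioo 0 S,
      0 ≤ (K₀ *ᵥ (z x y s - ∑ j, zi j x y s) - K i *ᵥ zi i x y s) ⬝ᵥ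
        (zis i x y s - zix i x y s))
    (hzBC : ∀ y ∈ Set.Icc y₀ y₁, ∀ s ∈ Set.Icc 0 S, z x₁ y s = 0)
    (hziBC : ∀ i, ∀ y ∈ Set.Icc y₀ y₁, ∀ s ∈ Set.Icc 0 S, zi i x₁ y s = 0) :
    let W : ℝ → ℝ := fun s => (1 / 2) * ∫ q in Set.Icc x₀ x₁ ×ˢ Set.Icc y₀ y₁,
      p q * gkvForm K₀ K (z q.1 q.2 s) fun i => zi i q.1 q.2 s
    ∀ s ∈ Set.Icc 0 S, W s - W 0 ≤ ∫ s' in (0 : ℝ)..s,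
      -∫ q in Set.Icc x₀ x₁ ×ˢ Set.Icc y₀ y₁,
        p q * (K₀ *ᵥ (z q.1 q.2 s' - ∑ i, zi i q.1 q.2 s') ⬝ᵥ v q.1 q.2 s') := by
  intro W s hs
  set B := (Set.Icc x₀ x₁ ×ˢ Set.Icc y₀ y₁) ×ˢ Set.Icc 0 S
  let Z : (ℝ × ℝ) × ℝ → d → ℝ := fun q => z q.1.1 q.1.2 q.2
  let Zi : ι → (ℝ × ℝ) × ℝ → d → ℝ := fun i q => zi i q.1.1 q.1.2 q.2
  let w : (ℝ × ℝ) × ℝ → ℝ := fun q => p q.1 * gkvForm K₀ K (Z q) fun i => Zi i q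
  let h : (ℝ × ℝ) × ℝ → ℝ := fun q =>
    2 * -(p q.1 * (K₀ *ᵥ (Z q - ∑ i, Zi i q) ⬝ᵥ v q.1.1 q.1.2 q.2))
  have hZ : ContDiffOn ℝ 1 Z B := contDiffOn_comp_prodAssoc hz
  have hZi : ∀ i, ContDiffOn ℝ 1 (Zi i) B := fun i => contDiffOn_comp_prodAssoc (hzi i)
  have hP : ContDiffOn ℝ 1 (fun q : (ℝ × ℝ) × ℝ => p q.1) B :=
    hp.comp contDiff_fst.contDiffOn fun _ hq => hq.1
  have hw : ContDiffOn ℝ 1 w B := hP.mul (contDiffOn_gkvForm hZ hZi)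
  have hf : ContinuousOn (fun q => K₀ *ᵥ (Z q - ∑ i, Zi i q)) B :=
    (Continuous.matrix_mulVec continuous_const continuous_id).comp_continuousOn
      (hZ.sub (ContDiffOn.sum fun i _ => hZi i)).continuousOn
  have hh : ContinuousOn h B :=
    continuousOn_const.mul (hP.continuousOn.mul (continuousOn_dotProduct hf hv)).neg
  have hle : ∀ x ∈ Set.Ioo x₀ x₁, ∀ y ∈ Set.Ioo y₀ y₁, ∀ t ∈ Set.Ioo 0 S,
      lineDeriv ℝ w ((x, y), t) characteristicDir ≤ h ((x, y), t) := by
    intro x hxI y hyI t htI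
    have hR_nhds : Set.Icc x₀ x₁ ×ˢ Set.Icc y₀ y₁ ∈ nhds (x, y) :=
      prod_mem_nhds (Icc_mem_nhds hxI.1 hxI.2) (Icc_mem_nhds hyI.1 hyI.2)
    have hB_nhds : B ∈ nhds ((x, y), t) := prod_mem_nhds hR_nhds (Icc_mem_nhds htI.1 htI.2)
    exact lineDeriv_characteristicDir_mul_gkvForm_le hK₀ hK
      ((hp.contDiffAt hR_nhds).differentiableAt one_ne_zero) (hp0 _ (mem_of_mem_nhds hR_nhds))
      (hpx x hxI y hyI) ((hZ.contDiffAt hB_nhds).differentiableAt one_ne_zero)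
      (fun i => ((hZi i).contDiffAt hB_nhds).differentiableAt one_ne_zero)
      (hzx x hxI y hyI t htI) (hzs x hxI y hyI t htI) (fun i => hzix i x hxI y hyI t htI)
      (fun i => hzis i x hxI y hyI t htI) (hfriction x hxI y hyI t htI)
      fun i => hdashpot i x hxI y hyI t htI
  have hflux : ∀ y ∈ Set.Icc y₀ y₁, ∀ t ∈ Set.Icc 0 S, w ((x₁, y), t) ≤ w ((x₀, y), t) := by
    intro y hyI t htI
    calc w ((x₁, y), t) = 0 := by
          simp [w, Z, Zi, hzBC y hyI t htI, hziBC _ y hyI t htI, gkvForm_zero]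
      _ ≤ w ((x₀, y), t) :=
          mul_nonneg (hp0 _ ⟨Set.left_mem_Icc.2 hx.le, hyI⟩) (gkvForm_nonneg hK₀ hK _ _)
  have key := setIntegral_sub_setIntegral_le_of_transport_le hx hy hw hh hle hflux hS hs
  simp only [h, integral_const_mul, intervalIntegral.integral_const_mul, integral_neg] at key
  simp only [W]
  linarith

/-- Lemma 5.2: passivity of the standard linear FrBD_{n+1}-GKV model on a rectangular
contact area `𝒞 = [−a,a] × [−b,b]`, with leading-edge boundary condition at `x = a` and a
pressure satisfying `∂p/∂x ≥ 0` (i.e. `∇·(p V̄) ≤ 0` for the transport field `V̄ = (−1,0)`). -/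
theorem frbd_gkv_rectangular_passivity (n : ℕ)
    (K₀ : Matrix (Fin 2) (Fin 2) ℝ) (K C : Fin n → Matrix (Fin 2) (Fin 2) ℝ)
    (hK₀ : K₀.PosDef) (hK : ∀ i, (K i).PosDef) (hC : ∀ i, (C i).PosDef)
    (Mm : (Fin 2 → ℝ) → Matrix (Fin 2) (Fin 2) ℝ)
    (hMm : ∀ y, (Mm y).PosDef) (hMmcont : Continuous Mm)
    (ε : ℝ) (hε : 0 ≤ ε)
    (a b S Vmin : ℝ) (ha : 0 < a) (hb : 0 < b) (hS : 0 < S) (hVmin : 0 < Vmin)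
    -- the pressure distribution
    (p : ℝ × ℝ → ℝ) (hp : ContDiff ℝ 1 p)
    (hp0 : ∀ q ∈ Set.Icc (-a) a ×ˢ Set.Icc (-b) b, 0 ≤ p q)
    (hpx : ∀ q ∈ Set.Icc (-a) a ×ˢ Set.Icc (-b) b,
      0 ≤ deriv (fun x => p (x, q.2)) q.1)
    -- the slip input and rolling speed
    (vb : ℝ → ℝ → ℝ → (Fin 2 → ℝ))
    (hvb : ContinuousOn (fun q : (ℝ × ℝ) × ℝ => vb q.1.1 q.1.2 q.2)
      ((Set.Icc (-a) a ×ˢ Set.Icc (-b) b) ×ˢ Set.Icc 0 S))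
    (Vr : ℝ → ℝ) (hVrc : ContinuousOn Vr (Set.Icc 0 S))
    (hVr : ∀ s ∈ Set.Icc 0 S, Vmin ≤ Vr s)
    -- the states and their regularity
    (z : ℝ → ℝ → ℝ → (Fin 2 → ℝ)) (zi : Fin n → ℝ → ℝ → ℝ → (Fin 2 → ℝ))
    (hzC1 : ContDiffOn ℝ 1 (fun q : ℝ × ℝ × ℝ => z q.1 q.2.1 q.2.2)
      (Set.Icc (-a) a ×ˢ Set.Icc (-b) b ×ˢ Set.Icc 0 S))
    (hziC1 : ∀ i, ContDiffOn ℝ 1 (fun q : ℝ × ℝ × ℝ => zi i q.1 q.2.1 q.2.2)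
      (Set.Icc (-a) a ×ˢ Set.Icc (-b) b ×ˢ Set.Icc 0 S))
    -- partial derivatives at interior points
    (zx zs : ℝ → ℝ → ℝ → (Fin 2 → ℝ)) (zix zis : Fin n → ℝ → ℝ → ℝ → (Fin 2 → ℝ))
    (hzx : ∀ x ∈ Set.Ioo (-a) a, ∀ y ∈ Set.Ioo (-b) b, ∀ s ∈ Set.Ioo 0 S,
      HasDerivAt (fun x' => z x' y s) (zx x y s) x)
    (hzs : ∀ x ∈ Set.Ioo (-a) a, ∀ y ∈ Set.Ioo (-b) b, ∀ s ∈ Set.Ioo 0 S,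
      HasDerivAt (fun s' => z x y s') (zs x y s) s)
    (hzix : ∀ i, ∀ x ∈ Set.Ioo (-a) a, ∀ y ∈ Set.Ioo (-b) b, ∀ s ∈ Set.Ioo 0 S,
      HasDerivAt (fun x' => zi i x' y s) (zix i x y s) x)
    (hzis : ∀ i, ∀ x ∈ Set.Ioo (-a) a, ∀ y ∈ Set.Ioo (-b) b, ∀ s ∈ Set.Ioo 0 S,
      HasDerivAt (fun s' => zi i x y s') (zis i x y s) s)
    -- the standard linear FrBD_{n+1}-GKV equations at interior points: D z = Ψ K₀ z₀ − v̄
    (hPDEz : ∀ x ∈ Set.Ioo (-a) a, ∀ y ∈ Set.Ioo (-b) b, ∀ s ∈ Set.Ioo 0 S,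
      zs x y s - zx x y s =
        -(((Vr s)⁻¹ *
            regNorm ε ((Mm (Vr s • vb x y s)).mulVec (Vr s • vb x y s))) •
          ((Mm (Vr s • vb x y s) * Mm (Vr s • vb x y s))⁻¹.mulVec
            (K₀.mulVec (z x y s - ∑ i, zi i x y s)))) - vb x y s)
    -- and D zᵢ = (1/V_r) Cᵢ⁻¹ (K₀ z₀ − Kᵢ zᵢ)
    (hPDEzi : ∀ i, ∀ x ∈ Set.Ioo (-a) a, ∀ y ∈ Set.Ioo (-b) b, ∀ s ∈ Set.Ioo 0 S,
      zis i x y s - zix i x y s =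
        (Vr s)⁻¹ • ((C i)⁻¹.mulVec
          (K₀.mulVec (z x y s - ∑ j, zi j x y s) - (K i).mulVec (zi i x y s))))
    -- leading-edge boundary condition at x = a
    (hBCz : ∀ y ∈ Set.Icc (-b) b, ∀ s ∈ Set.Icc 0 S, z a y s = 0)
    (hBCzi : ∀ i, ∀ y ∈ Set.Icc (-b) b, ∀ s ∈ Set.Icc 0 S, zi i a y s = 0) :
    let z₀ : ℝ → ℝ → ℝ → (Fin 2 → ℝ) := fun x y s => z x y s - ∑ i, zi i x y s
    let W : ℝ → ℝ := fun s =>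
      (1/2) * ∫ q in Set.Icc (-a) a ×ˢ Set.Icc (-b) b,
        p q * ((z₀ q.1 q.2 s ⬝ᵥ K₀.mulVec (z₀ q.1 q.2 s)) +
          ∑ i, zi i q.1 q.2 s ⬝ᵥ (K i).mulVec (zi i q.1 q.2 s))
    ∀ s ∈ Set.Icc 0 S,
      W s - W 0 ≤ ∫ s' in (0:ℝ)..s,
        -(∫ q in Set.Icc (-a) a ×ˢ Set.Icc (-b) b,
          p q * (K₀.mulVec (z₀ q.1 q.2 s') ⬝ᵥ vb q.1 q.2 s')) := by
  have hVinv : ∀ s ∈ Set.Ioo 0 S, 0 ≤ (Vr s)⁻¹ := fun s hs =>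
    inv_nonneg.2 (hVmin.le.trans (hVr s (Set.Ioo_subset_Icc_self hs)))
  refine frbd_gkv_rectangular_passivity_general hK₀.posSemidef (fun i => (hK i).posSemidef)
    (neg_lt_self ha) (neg_lt_self hb) hS hp.contDiffOn hp0
    (fun x hx y hy => hpx (x, y) ⟨Set.Ioo_subset_Icc_self hx, Set.Ioo_subset_Icc_self hy⟩) hvb
    hzC1 hziC1 hzx hzs hzix hzis (fun x hx y hy s hs => ?_) (fun i x hx y hy s hs => ?_) hBCz hBCzi
  · rw [hPDEz x hx y hy s hs]
    exact dotProduct_friction_le (hMm _).isHermitian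
      (mul_nonneg (hVinv s hs) (Real.sqrt_nonneg _)) _ _
  · rw [hPDEzi i x hx y hy s hs]
    exact dotProduct_dashpot_nonneg (hC i).posSemidef (hVinv s hs) _
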